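/- Let Ω ⊆ ℂ be open and let φ₁, φ₂, φ₃ be smooth real-valued functions on Ω with φ₁+φ₂+φ₃ = 0 satisfying the sl(3) Toda equations: ∂∂̄φ₁ = e^{φ₁−φ₂}, ∂∂̄φ₂ = e^{φ₂−φ₃} − e^{φ₁−φ₂}, ∂∂̄φ₃ = −e^{φ₂−φ₃}. Set h = −∂φ₁, f = ∂²φ₁ + ∂φ₁·∂φ₂, g = ∂φ₃, and G = (1 + h·E₂₁ + f·E₃₁)·(1 + g·E₃₂), a lower-triangular unipotent SL(3,ℂ)-valued map. Let A' = diag(∂φ₁, ∂φ₂, ∂φ₃) + E₁₂ + E₂₃ and A'' = e^{φ₁−φ₂}E₂₁ + e^{φ₂−φ₃}E₃₂ be the sl(3) Toda connection forms. Then G⁻¹A'G + G⁻¹∂G = E₁₂ + E₂₃ + w₃·E₃₁ + w₂·E₃₂ and G⁻¹A''G + G⁻¹∂̄G = 0, where w₂ = (∂φ₃)² + ∂²φ₃ − ∂²φ₁ − ∂φ₁·∂φ₂ and w₃ = ∂f + f·∂φ₃. -/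

import Mathlib

open Complex Matrix

/-- Wirtinger derivative `∂f = ½(∂ₓf − i ∂_y f)`. -/
noncomputable def wd (f : ℂ → ℂ) (z : ℂ) : ℂ :=
  (1 / 2 : ℂ) * (fderiv ℝ f z 1 - Complex.I * fderiv ℝ f z Complex.I)

/-- Wirtinger derivative `∂̄f = ½(∂ₓf + i ∂_y f)`. -/
noncomputable def wdb (f : ℂ → ℂ) (z : ℂ) : ℂ :=
  (1 / 2 : ℂ) * (fderiv ℝ f z 1 + Complex.I * fderiv ℝ f z Complex.I)

/-- Entrywise Wirtinger derivative `∂A` of a matrix-valued function. -/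
noncomputable def mwd {n : ℕ} (A : ℂ → Matrix (Fin n) (Fin n) ℂ) (z : ℂ) :
    Matrix (Fin n) (Fin n) ℂ :=
  Matrix.of fun i j => wd (fun w => A w i j) z

/-- Entrywise Wirtinger derivative `∂̄A` of a matrix-valued function. -/
noncomputable def mwdb {n : ℕ} (A : ℂ → Matrix (Fin n) (Fin n) ℂ) (z : ℂ) :
    Matrix (Fin n) (Fin n) ℂ :=
  Matrix.of fun i j => wdb (fun w => A w i j) z

/-- `∂φ` for a real-valued function `φ`. -/
noncomputable def pd (φ : ℂ → ℝ) : ℂ → ℂ :=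
  fun z => wd (fun w => ((φ w : ℝ) : ℂ)) z

/-- `∂̄φ` for a real-valued function `φ`. -/
noncomputable def pdb (φ : ℂ → ℝ) : ℂ → ℂ :=
  fun z => wdb (fun w => ((φ w : ℝ) : ℂ)) z

/-- `h = −∂φ₁`. -/
noncomputable def hsl3 (φ1 : ℂ → ℝ) : ℂ → ℂ := fun z => -(pd φ1 z)

/-- `f = ∂²φ₁ + ∂φ₁·∂φ₂`. -/
noncomputable def fsl3 (φ1 φ2 : ℂ → ℝ) : ℂ → ℂ :=
  fun z => wd (pd φ1) z + pd φ1 z * pd φ2 z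

/-- The lower-triangular unipotent gauge `G = (1 + hE₂₁ + fE₃₁)(1 + gE₃₂)`, `g = ∂φ₃`. -/
noncomputable def Gsl3 (φ1 φ2 φ3 : ℂ → ℝ) (z : ℂ) : Matrix (Fin 3) (Fin 3) ℂ :=
  !![1, 0, 0; hsl3 φ1 z, 1, 0; fsl3 φ1 φ2 z, 0, 1] *
    !![1, 0, 0; 0, 1, 0; 0, pd φ3 z, 1]

/-- The `sl(3)` Toda connection form `A' = diag(∂φ₁,∂φ₂,∂φ₃) + E₁₂ + E₂₃`. -/
noncomputable def Apsl3 (φ1 φ2 φ3 : ℂ → ℝ) (z : ℂ) : Matrix (Fin 3) (Fin 3) ℂ :=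
  !![pd φ1 z, 1, 0; 0, pd φ2 z, 1; 0, 0, pd φ3 z]

/-- The `sl(3)` Toda connection form `A'' = e^{φ₁−φ₂}E₂₁ + e^{φ₂−φ₃}E₃₂`. -/
noncomputable def Appsl3 (φ1 φ2 φ3 : ℂ → ℝ) (z : ℂ) : Matrix (Fin 3) (Fin 3) ℂ :=
  !![0, 0, 0; ((Real.exp (φ1 z - φ2 z) : ℝ) : ℂ), 0, 0;
      0, ((Real.exp (φ2 z - φ3 z) : ℝ) : ℂ), 0]

/-- `w₂ = (∂φ₃)² + ∂²φ₃ − ∂²φ₁ − ∂φ₁·∂φ₂`. -/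
noncomputable def w2sl3 (φ1 φ2 φ3 : ℂ → ℝ) : ℂ → ℂ :=
  fun z => (pd φ3 z) ^ 2 + wd (pd φ3) z - wd (pd φ1) z - pd φ1 z * pd φ2 z

/-- `w₃ = ∂f + f·∂φ₃`. -/
noncomputable def w3sl3 (φ1 φ2 φ3 : ℂ → ℝ) : ℂ → ℂ :=
  fun z => wd (fsl3 φ1 φ2) z + fsl3 φ1 φ2 z * pd φ3 z

theorem aux_wd_congr {f g : ℂ → ℂ} {z : ℂ} (h : f =ᶠ[nhds z] g) : wd f z = wd g z := by
  simp only [wd, h.fderiv_eq]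

theorem aux_wdb_congr {f g : ℂ → ℂ} {z : ℂ} (h : f =ᶠ[nhds z] g) : wdb f z = wdb g z := by
  simp only [wdb, h.fderiv_eq]

theorem aux_wd_add {f g : ℂ → ℂ} {z : ℂ} (hf : DifferentiableAt ℝ f z)
    (hg : DifferentiableAt ℝ g z) : wd (fun w => f w + g w) z = wd f z + wd g z := by
  simp only [wd, fderiv_fun_add hf hg, ContinuousLinearMap.add_apply]
  ring

theorem aux_wdb_add {f g : ℂ → ℂ} {z : ℂ} (hf : DifferentiableAt ℝ f z)
    (hg : DifferentiableAt ℝ g z) : wdb (fun w => f w + g w) z = wdb f z + wdb g z := by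
  simp only [wdb, fderiv_fun_add hf hg, ContinuousLinearMap.add_apply]
  ring

theorem aux_wd_neg {f : ℂ → ℂ} {z : ℂ} : wd (fun w => - f w) z = - wd f z := by
  simp only [wd, fderiv_fun_neg, ContinuousLinearMap.neg_apply]
  ring

theorem aux_wdb_neg {f : ℂ → ℂ} {z : ℂ} : wdb (fun w => - f w) z = - wdb f z := by
  simp only [wdb, fderiv_fun_neg, ContinuousLinearMap.neg_apply]
  ring

theorem aux_wdb_mul {f g : ℂ → ℂ} {z : ℂ} (hf : DifferentiableAt ℝ f z)
    (hg : DifferentiableAt ℝ g z) :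
    wdb (fun w => f w * g w) z = wdb f z * g z + f z * wdb g z := by
  simp only [wdb, fderiv_fun_mul hf hg, ContinuousLinearMap.add_apply,
    ContinuousLinearMap.smul_apply, smul_eq_mul]
  ring

theorem aux_wd_const (c z : ℂ) : wd (fun _ => c) z = 0 := by
  simp [wd]

theorem aux_wdb_const (c z : ℂ) : wdb (fun _ => c) z = 0 := by
  simp [wdb]

theorem aux_wd_exp {f : ℂ → ℂ} {z : ℂ} (hf : DifferentiableAt ℝ f z) :
    wd (fun w => Complex.exp (f w)) z = Complex.exp (f z) * wd f z := by
  have h : fderiv ℝ (fun w => Complex.exp (f w)) z = Complex.exp (f z) • fderiv ℝ f z :=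
    hf.hasFDerivAt.cexp.fderiv
  simp only [wd, h, ContinuousLinearMap.smul_apply, smul_eq_mul]
  ring

theorem aux_smooth_fderiv {Ω : Set ℂ} (hΩ : IsOpen Ω) {f : ℂ → ℂ}
    (hf : ContDiffOn ℝ (⊤ : ℕ∞) f Ω) (v : ℂ) :
    ContDiffOn ℝ (⊤ : ℕ∞) (fun z => fderiv ℝ f z v) Ω :=
  (hf.fderiv_of_isOpen (m := (⊤ : ℕ∞)) hΩ (by simp)).clm_apply contDiffOn_const

theorem aux_smooth_wd {Ω : Set ℂ} (hΩ : IsOpen Ω) {f : ℂ → ℂ}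
    (hf : ContDiffOn ℝ (⊤ : ℕ∞) f Ω) : ContDiffOn ℝ (⊤ : ℕ∞) (wd f) Ω :=
  contDiffOn_const.mul ((aux_smooth_fderiv hΩ hf 1).sub
    (contDiffOn_const.mul (aux_smooth_fderiv hΩ hf Complex.I)))

theorem aux_smooth_diff {Ω : Set ℂ} (hΩ : IsOpen Ω) {f : ℂ → ℂ}
    (hf : ContDiffOn ℝ (⊤ : ℕ∞) f Ω) {z : ℂ} (hz : z ∈ Ω) : DifferentiableAt ℝ f z :=
  (hf.contDiffAt (hΩ.mem_nhds hz)).differentiableAt (by simp)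

theorem aux_comm {Ω : Set ℂ} (hΩ : IsOpen Ω) {f : ℂ → ℂ}
    (hf : ContDiffOn ℝ (⊤ : ℕ∞) f Ω) {z : ℂ} (hz : z ∈ Ω) :
    wdb (wd f) z = wd (wdb f) z := by
  have hd : ∀ v, DifferentiableAt ℝ (fun w => fderiv ℝ f w v) z := fun v =>
    aux_smooth_diff hΩ (aux_smooth_fderiv hΩ hf v) hz
  have hs : fderiv ℝ (fun w => fderiv ℝ f w 1) z Complex.I
      = fderiv ℝ (fun w => fderiv ℝ f w Complex.I) z 1 := by
    have hD : DifferentiableAt ℝ (fderiv ℝ f) z :=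
      ((hf.fderiv_of_isOpen (m := (⊤ : ℕ∞)) hΩ (by simp)).contDiffAt
        (hΩ.mem_nhds hz)).differentiableAt (by simp)
    have hsym : IsSymmSndFDerivAt ℝ f z :=
      (hf.contDiffAt (hΩ.mem_nhds hz)).isSymmSndFDerivAt (by
        simp only [minSmoothness_of_isRCLikeNormedField]
        exact WithTop.coe_le_coe.2 (le_top : (2 : ℕ∞) ≤ ⊤))
    rw [fderiv_clm_apply hD (differentiableAt_const _),
      fderiv_clm_apply hD (differentiableAt_const _)]
    simpa using hsym.eq Complex.I 1
  have e1 : ∀ v, fderiv ℝ (wd f) z v = (1 / 2 : ℂ) * (fderiv ℝ (fun w => fderiv ℝ f w 1) z v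
      - Complex.I * fderiv ℝ (fun w => fderiv ℝ f w Complex.I) z v) := by
    intro v
    have : HasFDerivAt (wd f) _ z :=
      (((hd 1).hasFDerivAt.sub ((hd Complex.I).hasFDerivAt.const_mul Complex.I)).const_mul
        (1 / 2 : ℂ))
    rw [this.fderiv]
    simp
  have e2 : ∀ v, fderiv ℝ (wdb f) z v = (1 / 2 : ℂ) * (fderiv ℝ (fun w => fderiv ℝ f w 1) z v
      + Complex.I * fderiv ℝ (fun w => fderiv ℝ f w Complex.I) z v) := by
    intro v
    have : HasFDerivAt (wdb f) _ z :=
      (((hd 1).hasFDerivAt.add ((hd Complex.I).hasFDerivAt.const_mul Complex.I)).const_mul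
        (1 / 2 : ℂ))
    rw [this.fderiv]
    simp
    ring
  rw [wdb, wd, e1, e1, e2, e2, hs]
  ring

theorem aux_G (φ1 φ2 φ3 : ℂ → ℝ) (z : ℂ) : Gsl3 φ1 φ2 φ3 z =
    !![1, 0, 0; -(pd φ1 z), 1, 0; fsl3 φ1 φ2 z, pd φ3 z, 1] := by
  ext i j
  fin_cases i <;> fin_cases j <;> simp [Gsl3, hsl3, Matrix.mul_apply, Fin.sum_univ_three]

theorem aux_gauge {G A D W : Matrix (Fin 3) (Fin 3) ℂ} (hG : IsUnit G.det)
    (h : A * G + D = G * W) : G⁻¹ * A * G + G⁻¹ * D = W := by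
  rw [Matrix.mul_assoc, ← Matrix.mul_add, h, ← Matrix.mul_assoc, Matrix.nonsing_inv_mul _ hG,
    Matrix.one_mul]

/-- The gauge `G` maps the `sl(3)` Toda connection to the Drinfeld–Sokolov form
`E₁₂ + E₂₃ + w₃E₃₁ + w₂E₃₂` with vanishing `∂̄`-part. -/
theorem sl3_drinfeld_sokolov_gauge (Ω : Set ℂ) (hΩ : IsOpen Ω)
    (φ1 φ2 φ3 : ℂ → ℝ)
    (h1 : ContDiffOn ℝ (⊤ : ℕ∞) φ1 Ω) (h2 : ContDiffOn ℝ (⊤ : ℕ∞) φ2 Ω) (h3 : ContDiffOn ℝ (⊤ : ℕ∞) φ3 Ω)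
    (hsum : ∀ z ∈ Ω, φ1 z + φ2 z + φ3 z = 0)
    (t1 : ∀ z ∈ Ω, wd (pdb φ1) z = ((Real.exp (φ1 z - φ2 z) : ℝ) : ℂ))
    (t2 : ∀ z ∈ Ω, wd (pdb φ2) z =
      ((Real.exp (φ2 z - φ3 z) : ℝ) : ℂ) - ((Real.exp (φ1 z - φ2 z) : ℝ) : ℂ))
    (t3 : ∀ z ∈ Ω, wd (pdb φ3) z = -((Real.exp (φ2 z - φ3 z) : ℝ) : ℂ)) :
    ∀ z ∈ Ω,
      (Gsl3 φ1 φ2 φ3 z)⁻¹ * Apsl3 φ1 φ2 φ3 z * Gsl3 φ1 φ2 φ3 z +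
          (Gsl3 φ1 φ2 φ3 z)⁻¹ * mwd (Gsl3 φ1 φ2 φ3) z =
        !![0, 1, 0; 0, 0, 1; w3sl3 φ1 φ2 φ3 z, w2sl3 φ1 φ2 φ3 z, 0] ∧
      (Gsl3 φ1 φ2 φ3 z)⁻¹ * Appsl3 φ1 φ2 φ3 z * Gsl3 φ1 φ2 φ3 z +
          (Gsl3 φ1 φ2 φ3 z)⁻¹ * mwdb (Gsl3 φ1 φ2 φ3) z = 0 := by
  intro z hz
  have C1 : ContDiffOn ℝ (⊤ : ℕ∞) (fun w => ((φ1 w : ℝ) : ℂ)) Ω :=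
    Complex.ofRealCLM.contDiff.comp_contDiffOn h1
  have C2 : ContDiffOn ℝ (⊤ : ℕ∞) (fun w => ((φ2 w : ℝ) : ℂ)) Ω :=
    Complex.ofRealCLM.contDiff.comp_contDiffOn h2
  have C3 : ContDiffOn ℝ (⊤ : ℕ∞) (fun w => ((φ3 w : ℝ) : ℂ)) Ω :=
    Complex.ofRealCLM.contDiff.comp_contDiffOn h3
  have D1 : ContDiffOn ℝ (⊤ : ℕ∞) (pd φ1) Ω := aux_smooth_wd hΩ C1
  have D2 : ContDiffOn ℝ (⊤ : ℕ∞) (pd φ2) Ω := aux_smooth_wd hΩ C2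
  have DD1 : ContDiffOn ℝ (⊤ : ℕ∞) (wd (pd φ1)) Ω := aux_smooth_wd hΩ D1
  have d1 := aux_smooth_diff hΩ C1 hz
  have d2 := aux_smooth_diff hΩ C2 hz
  have d3 := aux_smooth_diff hΩ C3 hz
  have s : pd φ1 z + pd φ2 z + pd φ3 z = 0 := by
    have e := aux_wd_add (d1.fun_add d2) d3
    rw [aux_wd_add d1 d2] at e
    have e' : wd (fun w => ((φ1 w : ℝ) : ℂ) + ((φ2 w : ℝ) : ℂ) + ((φ3 w : ℝ) : ℂ)) z
        = wd (fun _ => 0) z := by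
      apply aux_wd_congr
      filter_upwards [hΩ.mem_nhds hz] with w hw
      exact_mod_cast hsum w hw
    rw [aux_wd_const] at e'
    exact e.symm.trans e'
  have b1 : ∀ w ∈ Ω, wdb (pd φ1) w = ((Real.exp (φ1 w - φ2 w) : ℝ) : ℂ) := fun w hw =>
    (aux_comm hΩ C1 hw).trans (t1 w hw)
  have b2 : wdb (pd φ2) z = _ := (aux_comm hΩ C2 hz).trans (t2 z hz)
  have b3 : wdb (pd φ3) z = _ := (aux_comm hΩ C3 hz).trans (t3 z hz)
  have b11 : wdb (wd (pd φ1)) z =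
      ((Real.exp (φ1 z - φ2 z) : ℝ) : ℂ) * (pd φ1 z - pd φ2 z) := by
    rw [aux_comm hΩ D1 hz]
    have e : wd (wdb (pd φ1)) z
        = wd (fun w => Complex.exp (((φ1 w : ℝ) : ℂ) + -((φ2 w : ℝ) : ℂ))) z := by
      apply aux_wd_congr
      filter_upwards [hΩ.mem_nhds hz] with w hw
      rw [b1 w hw]
      push_cast
      rw [sub_eq_add_neg]
    rw [e, aux_wd_exp (d1.fun_add d2.fun_neg), aux_wd_add d1 d2.fun_neg, aux_wd_neg]
    push_cast
    rw [sub_eq_add_neg, sub_eq_add_neg]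
    rfl
  have bf : wdb (fsl3 φ1 φ2) z = ((Real.exp (φ2 z - φ3 z) : ℝ) : ℂ) * pd φ1 z := by
    have e1 := aux_smooth_diff hΩ D1 hz
    have e2 := aux_smooth_diff hΩ D2 hz
    have e11 := aux_smooth_diff hΩ DD1 hz
    have e : wdb (fsl3 φ1 φ2) z = _ := aux_wdb_add e11 (e1.fun_mul e2)
    rw [e, aux_wdb_mul e1 e2, b11, b1 z hz, b2]
    ring
  have hdet : IsUnit (Gsl3 φ1 φ2 φ3 z).det := by
    rw [aux_G, Matrix.det_fin_three]
    simp
  have hm : mwd (Gsl3 φ1 φ2 φ3) z =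
      !![0, 0, 0; -(wd (pd φ1) z), 0, 0; wd (fsl3 φ1 φ2) z, wd (pd φ3) z, 0] := by
    rw [show Gsl3 φ1 φ2 φ3 = _ from funext (aux_G φ1 φ2 φ3)]
    ext i j
    fin_cases i <;> fin_cases j <;> simp [mwd, aux_wd_const, aux_wd_neg]
  have hmb : mwdb (Gsl3 φ1 φ2 φ3) z =
      !![0, 0, 0; -(wdb (pd φ1) z), 0, 0; wdb (fsl3 φ1 φ2) z, wdb (pd φ3) z, 0] := by
    rw [show Gsl3 φ1 φ2 φ3 = _ from funext (aux_G φ1 φ2 φ3)]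
    ext i j
    fin_cases i <;> fin_cases j <;> simp [mwdb, aux_wdb_const, aux_wdb_neg]
  have hb : pd φ2 z = - pd φ1 z - pd φ3 z := by linear_combination s
  constructor
  · apply aux_gauge hdet
    rw [hm, aux_G, Apsl3]
    ext i j
    fin_cases i <;> fin_cases j <;>
      simp [Matrix.mul_apply, Fin.sum_univ_three, w2sl3, w3sl3, fsl3, hb] <;> ring
  · apply aux_gauge hdet
    rw [hmb, aux_G, Appsl3, bf, b1 z hz, b3]
    ext i j
    fin_cases i <;> fin_cases j <;>
      simp [Matrix.mul_apply, Fin.sum_univ_three]
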